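/- Let E, F be finite sets of variables, x a variable with x ∈ F, and S, K ∈ ℕ with S > 0. Then B(E, S) ≤_T A(F, x, K) if and only if F ⊆ E and S ≤ K + 1. -/

import Mathlib

/-- The impredicative maximum on natural numbers. -/
def imaxN : ℕ → ℕ → ℕ
  | _, 0 => 0
  | i, (j+1) => max i (j+1)

/-- Sublevels A(E,x,S) and B(E,S). -/
inductive SubLvl where
  | A : Finset ℕ → ℕ → ℕ → SubLvl
  | B : Finset ℕ → ℕ → SubLvl
deriving DecidableEq

/-- Value of a sublevel under a valuation. -/
def evalS (σ : ℕ → ℕ) : SubLvl → ℕ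
  | .A E x S => if ∃ y ∈ E, σ y = 0 then 0 else σ x + S
  | .B E S => if ∃ y ∈ E, σ y = 0 then 0 else S

/-- Wellformed sublevels. -/
def Wf : SubLvl → Prop
  | .A E x _ => x ∈ E
  | .B _ S => 0 < S

/-- Semantic comparison of sublevels. -/
def leT (u v : SubLvl) : Prop := ∀ σ : ℕ → ℕ, evalS σ u ≤ evalS σ v

theorem B_le_A_iff (E F : Finset ℕ) (x : ℕ) (hx : x ∈ F) (S K : ℕ) (hS : 0 < S) :
    leT (SubLvl.B E S) (SubLvl.A F x K) ↔ F ⊆ E ∧ S ≤ K + 1 := by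
  constructor
  · intro h
    constructor
    · intro y hy
      by_contra hyE
      have h1 := h (fun z => if z = y then 0 else 1)
      have hE : ¬ ∃ z ∈ E, (if z = y then 0 else 1) = 0 := by
        rintro ⟨z, hz, h0⟩
        by_cases hzy : z = y
        · exact hyE (hzy ▸ hz)
        · simp [hzy] at h0
      have hF : ∃ z ∈ F, (if z = y then 0 else 1) = 0 := ⟨y, hy, by simp⟩
      simp only [evalS] at h1
      rw [if_neg hE, if_pos hF] at h1
      omega
    · have h1 := h (fun _ => 1)
      simp [evalS] at h1
      omega
  · rintro ⟨hFE, hSK⟩ σ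
    simp only [evalS]
    by_cases hE : ∃ y ∈ E, σ y = 0
    · rw [if_pos hE]
      exact Nat.zero_le _
    · have hF : ¬ ∃ y ∈ F, σ y = 0 := fun ⟨y, hy, h0⟩ => hE ⟨y, hFE hy, h0⟩
      rw [if_neg hE, if_neg hF]
      have : σ x ≠ 0 := fun h0 => hF ⟨x, hx, h0⟩
      omega
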